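/- There exists a constant C > 0 such that for all sufficiently large real x, writing y = log log x, the number of primes p ≤ x for which h_y(p−1) > 1/(y·√(log y)) or h_y(p+1) > 1/(y·√(log y)) is at most C · π(x) / √(log y). In particular this count is o(π(x)). -/

import Mathlib

open Filter Topology

/-- `hy y n` is the sum of `1/r` over the prime divisors `r` of `n` with `r > y`. -/
noncomputable def hy (y : ℝ) (n : ℕ) : ℝ :=
  ∑ r ∈ n.primeFactors.filter (fun r : ℕ => y < (r : ℝ)), (1 : ℝ) / r

section

open Finset ArithmeticFunction BoundingSieve
open scoped ArithmeticFunction.Moebius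

/-!
By Markov's inequality it is enough that the sum of `h_y(p ± 1)` over the primes `p ≤ x` is
`O(π(x) / (y log y))`. Interchanging the summations, this sum counts, with weight `1 / r` for each
prime `r > y`, the primes `p ≤ x` in the residue class `∓ 1` mod `r`. There are
`O(x / (r log x))` of them when `r ≤ √x`, by the Brun–Titchmarsh inequality, and trivially
`O(x / r)` when `r > √x`; moreover `∑ 1 / r² = O(1 / (u log u))` over the primes `r > u`. The large
`r` then contribute `O(√x / log x)`, which is negligible for `y = log log x`.

The Brun–Titchmarsh inequality itself comes from Selberg's sieve, whose main term is controlled by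
`∑ 1 / φ(l) ≥ (φ(q) / q) log R`, summed over squarefree `l ≤ R` coprime to `q`.
-/

/-! ### Selberg's sieve -/

theorem sum_moebius_divisors_filter_dvd {m : ℕ} (hm : Squarefree m) (l : ℕ) :
    ∑ d ∈ m.divisors with l ∣ d, μ d = if l = m then μ m else 0 := by
  by_cases hlm : l ∣ m
  · obtain ⟨k, rfl⟩ := hlm
    have hl : l ≠ 0 := left_ne_zero_of_mul hm.ne_zero
    have hk : k ≠ 0 := right_ne_zero_of_mul hm.ne_zero
    have multiples : {d ∈ (l * k).divisors | l ∣ d} = k.divisors.image (l * ·) := by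
      ext d
      simp only [mem_filter, Nat.mem_divisors, mem_image]
      constructor
      · rintro ⟨⟨hd, -⟩, e, rfl⟩
        exact ⟨e, ⟨Nat.dvd_of_mul_dvd_mul_left (Nat.pos_of_ne_zero hl) hd, hk⟩, rfl⟩
      · rintro ⟨e, ⟨he, -⟩, rfl⟩
        exact ⟨⟨mul_dvd_mul_left l he, hm.ne_zero⟩, dvd_mul_right l e⟩
    calc ∑ d ∈ (l * k).divisors with l ∣ d, μ d
        = ∑ e ∈ k.divisors, μ (l * e) := by
          rw [multiples, sum_image fun a _ b _ h ↦ Nat.eq_of_mul_eq_mul_left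
            (Nat.pos_of_ne_zero hl) h]
      _ = μ l * ∑ e ∈ k.divisors, μ e := by
          rw [mul_sum]
          refine sum_congr rfl fun e he ↦ isMultiplicative_moebius.map_mul_of_coprime ?_
          exact (Nat.coprime_of_squarefree_mul hm).coprime_dvd_right (Nat.dvd_of_mem_divisors he)
      _ = if l = l * k then μ (l * k) else 0 := by
          rw [← coe_mul_zeta_apply, moebius_mul_coe_zeta, one_apply]
          rcases eq_or_ne k 1 with rfl | hk1
          · simp
          · simp [hk1, hl]
  · rw [if_neg fun h ↦ hlm h.dvd, filter_eq_empty_iff.2, sum_empty]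
    exact fun d hd hld ↦ hlm (hld.trans (Nat.dvd_of_mem_divisors hd))

theorem injOn_mul_div {d : ℕ} (hd : 0 < d) :
    Set.InjOn (fun x : ℕ × ℕ ↦ x.1 * (x.2 / d)) {x | x.1 ∣ d ∧ d ∣ x.2 ∧ Squarefree x.2} := by
  have gcd_eq {k l : ℕ} (hk : k ∣ d) (hdl : d ∣ l) (hl : Squarefree l) :
      (k * (l / d)).gcd d = k := by
    obtain ⟨m, rfl⟩ := hdl
    rw [Nat.mul_div_cancel_left m hd, (Nat.coprime_of_squarefree_mul hl).symm.gcd_mul_right_cancel,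
      Nat.gcd_eq_left hk]
  rintro ⟨k, l⟩ ⟨hk, hdl, hl⟩ ⟨k', l'⟩ ⟨hk', hdl', hl'⟩ heq
  dsimp only at hk hdl hl hk' hdl' hl' heq
  obtain rfl : k = k' := by
    rw [← gcd_eq hk hdl hl, heq, gcd_eq hk' hdl' hl']
  have hquot : l / d = l' / d := Nat.eq_of_mul_eq_mul_left (Nat.pos_of_dvd_of_pos hk hd) heq
  rw [← Nat.mul_div_cancel' hdl, hquot, Nat.mul_div_cancel' hdl']

section SelbergSieve

variable (s : BoundingSieve) (D : Finset ℕ)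

/-- The sum `∑ g(l)` over the set `D` of sieving moduli, where `g` are the Selberg terms; its
reciprocal is the density left by Selberg's sieve. -/
noncomputable def selbergSum : ℝ := ∑ l ∈ D, s.selbergTerms l

/-- Selberg's weights: among weights supported on `D` with value `1` at `1` they minimise the main
term of the `Λ²` sieve. -/
noncomputable def selbergWeight (d : ℕ) : ℝ :=
  μ d / s.nu d * ((∑ l ∈ D with d ∣ l, s.selbergTerms l) / selbergSum s D)

variable {s D}

theorem selbergSum_pos (hD : D ⊆ s.prodPrimes.divisors) (hne : D.Nonempty) :
    0 < selbergSum s D :=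
  sum_pos (fun _ hl ↦ selbergTerms_pos (Nat.dvd_of_mem_divisors (hD hl))) hne

theorem selbergWeight_one (hD : D ⊆ s.prodPrimes.divisors) (hne : D.Nonempty) :
    selbergWeight s D 1 = 1 := by
  have hS : ∑ l ∈ D, s.selbergTerms l ≠ 0 := (selbergSum_pos hD hne).ne'
  simp [selbergWeight, selbergSum, s.nu_mult.map_one, hS]

theorem selbergWeight_eq_zero (hclosed : ∀ ⦃l⦄, l ∈ D → ∀ ⦃d⦄, d ∣ l → d ∈ D) {d : ℕ} (hd : d ∉ D) :
    selbergWeight s D d = 0 := by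
  have : {l ∈ D | d ∣ l} = ∅ := filter_eq_empty_iff.2 fun l hl hdl ↦ hd (hclosed hl hdl)
  simp [selbergWeight, this]

theorem sum_nu_mul_selbergWeight (hD : D ⊆ s.prodPrimes.divisors) (l : ℕ) :
    (∑ d ∈ s.prodPrimes.divisors, if l ∣ d then s.nu d * selbergWeight s D d else 0) =
      if l ∈ D then μ l * s.selbergTerms l / selbergSum s D else 0 := by
  have cancel_nu : ∀ d ∈ s.prodPrimes.divisors, (if l ∣ d then s.nu d * selbergWeight s D d else 0)
      = ∑ m ∈ D, if l ∣ d ∧ d ∣ m then (μ d : ℝ) * (s.selbergTerms m / selbergSum s D) else 0 := by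
    intro d hd
    have hν : s.nu d ≠ 0 := nu_ne_zero (Nat.dvd_of_mem_divisors hd)
    by_cases hld : l ∣ d
    · simp only [hld, true_and, if_true, selbergWeight, sum_div, sum_filter, mul_sum]
      refine sum_congr rfl fun m _ ↦ ?_
      split_ifs
      · field_simp
      · ring
    · simp [hld]
  rw [sum_congr rfl cancel_nu, sum_comm, ← sum_ite_eq D l fun m ↦
    μ m * s.selbergTerms m / selbergSum s D]
  refine sum_congr rfl fun m hm ↦ ?_
  have hmP : m ∣ s.prodPrimes := Nat.dvd_of_mem_divisors (hD hm)
  have hfilter : {d ∈ s.prodPrimes.divisors | l ∣ d ∧ d ∣ m} = {d ∈ m.divisors | l ∣ d} := by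
    rw [← Nat.divisors_filter_dvd_of_dvd prodPrimes_ne_zero hmP, filter_filter]
    simp only [and_comm]
  rw [← sum_filter, hfilter, ← sum_mul, ← Int.cast_sum,
    sum_moebius_divisors_filter_dvd (squarefree_of_dvd_prodPrimes hmP)]
  split_ifs
  · ring
  · simp

theorem mainSum_lambdaSquared_selbergWeight (hD : D ⊆ s.prodPrimes.divisors) (hne : D.Nonempty) :
    s.mainSum (lambdaSquared (selbergWeight s D)) = 1 / selbergSum s D := by
  have hS := selbergSum_pos hD hne
  calc s.mainSum (lambdaSquared (selbergWeight s D))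
      = ∑ l ∈ s.prodPrimes.divisors,
          if l ∈ D then s.selbergTerms l / selbergSum s D ^ 2 else 0 := by
        rw [mainSum_lambdaSquared_eq_sum_mul_sum_sq]
        refine sum_congr rfl fun l hl ↦ ?_
        rw [sum_nu_mul_selbergWeight hD]
        have hl := Nat.dvd_of_mem_divisors hl
        have hg := selbergTerms_pos hl
        have hμ : (μ l : ℝ) ^ 2 = 1 := mod_cast
          moebius_sq_eq_one_of_squarefree (squarefree_of_dvd_prodPrimes hl)
        split_ifs
        · rw [div_pow, mul_pow, hμ]
          field_simp
        · simp
    _ = ∑ l ∈ D, s.selbergTerms l / selbergSum s D ^ 2 := by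
        rw [sum_ite_mem, inter_eq_right.2 hD]
    _ = 1 / selbergSum s D := by
        rw [← sum_div, ← selbergSum, sq, div_mul_cancel_left₀ hS.ne', one_div]

theorem sum_divisors_selbergTerms_mul_eq {d l : ℕ} (hl : l ∣ s.prodPrimes) (hdl : d ∣ l) :
    s.nu d * ∑ k ∈ d.divisors, s.selbergTerms (k * (l / d)) = s.selbergTerms l := by
  obtain ⟨m, rfl⟩ := hdl
  have hd : d ∣ s.prodPrimes := (dvd_mul_right d m).trans hl
  have hd0 : 0 < d := Nat.pos_of_dvd_of_pos hd (Nat.pos_of_ne_zero prodPrimes_ne_zero)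
  have hcop : d.Coprime m := Nat.coprime_of_squarefree_mul (squarefree_of_dvd_prodPrimes hl)
  have sum_divisors : ∑ k ∈ d.divisors, s.selbergTerms k = s.selbergTerms d * (s.nu d)⁻¹ := by
    rw [← sum_divisors_selbergTerms_eq_selbergTerms_mul_nu_inv hd, ← sum_filter,
      Nat.divisors_filter_dvd_of_dvd prodPrimes_ne_zero hd]
  have hmul : ∀ k ∈ d.divisors, s.selbergTerms (k * m) = s.selbergTerms k * s.selbergTerms m :=
    fun k hk ↦ selbergTerms_isMultiplicative.map_mul_of_coprime
      (hcop.coprime_dvd_left (Nat.dvd_of_mem_divisors hk))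
  have hν : s.nu d ≠ 0 := nu_ne_zero hd
  rw [Nat.mul_div_cancel_left m hd0, sum_congr rfl hmul, ← sum_mul, sum_divisors,
    selbergTerms_isMultiplicative.map_mul_of_coprime hcop]
  field_simp

-- With `g` the Selberg terms, `g(l) = ν(d) ∑_{k ∣ d} g(k l / d)`, and `(k, l) ↦ k l / d` is
-- injective with values in `D`, so no term of `∑_{m ∈ D} g(m)` is used twice.
theorem sum_selbergTerms_filter_dvd_le (hD : D ⊆ s.prodPrimes.divisors)
    (hclosed : ∀ ⦃l⦄, l ∈ D → ∀ ⦃d⦄, d ∣ l → d ∈ D) {d : ℕ} (hd : d ∣ s.prodPrimes) :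
    ∑ l ∈ D with d ∣ l, s.selbergTerms l ≤ s.nu d * selbergSum s D := by
  have hd0 : 0 < d := Nat.pos_of_dvd_of_pos hd (Nat.pos_of_ne_zero prodPrimes_ne_zero)
  have dvd_of_mem {l : ℕ} (hl : l ∈ D) : l ∣ s.prodPrimes := Nat.dvd_of_mem_divisors (hD hl)
  let f : ℕ × ℕ → ℕ := fun x ↦ x.1 * (x.2 / d)
  have hinj : Set.InjOn f (d.divisors ×ˢ {l ∈ D | d ∣ l} : Finset (ℕ × ℕ)) := by
    refine (injOn_mul_div hd0).mono fun x hx ↦ ?_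
    simp only [coe_product, Set.mem_prod, mem_coe, Nat.mem_divisors, mem_filter] at hx
    exact ⟨hx.1.1, hx.2.2, squarefree_of_dvd_prodPrimes (dvd_of_mem hx.2.1)⟩
  have hmaps : (d.divisors ×ˢ {l ∈ D | d ∣ l}).image f ⊆ D := by
    rintro _ hx
    obtain ⟨⟨k, l⟩, hkl, rfl⟩ := mem_image.1 hx
    simp only [mem_product, Nat.mem_divisors, mem_filter] at hkl
    obtain ⟨⟨hk, -⟩, hl, hdl⟩ := hkl
    refine hclosed hl ?_
    simpa only [Nat.mul_div_cancel' hdl] using mul_dvd_mul_right hk (l / d)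
  calc ∑ l ∈ D with d ∣ l, s.selbergTerms l
      = s.nu d * ∑ x ∈ d.divisors ×ˢ {l ∈ D | d ∣ l}, s.selbergTerms (f x) := by
        rw [sum_product_right, mul_sum]
        refine sum_congr rfl fun l hl ↦ ?_
        rw [mem_filter] at hl
        exact (sum_divisors_selbergTerms_mul_eq (dvd_of_mem hl.1) hl.2).symm
    _ ≤ s.nu d * selbergSum s D := by
        rw [← sum_image hinj]
        refine mul_le_mul_of_nonneg_left (sum_le_sum_of_subset_of_nonneg hmaps fun l hl _ ↦ ?_)
          (nu_pos_of_dvd_prodPrimes hd).le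
        exact (selbergTerms_pos (dvd_of_mem hl)).le

theorem abs_selbergWeight_le_one (hD : D ⊆ s.prodPrimes.divisors) (hne : D.Nonempty)
    (hclosed : ∀ ⦃l⦄, l ∈ D → ∀ ⦃d⦄, d ∣ l → d ∈ D) {d : ℕ} (hd : d ∣ s.prodPrimes) :
    |selbergWeight s D d| ≤ 1 := by
  have hS := selbergSum_pos hD hne
  have hν := nu_pos_of_dvd_prodPrimes hd
  have hμ : |(μ d : ℝ)| ≤ 1 := mod_cast abs_moebius_le_one
  have hsum : 0 ≤ ∑ l ∈ D with d ∣ l, s.selbergTerms l :=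
    sum_nonneg fun l hl ↦ (selbergTerms_pos
      (Nat.dvd_of_mem_divisors (hD (mem_of_mem_filter l hl)))).le
  rw [selbergWeight, abs_mul, abs_div, abs_of_pos hν, abs_of_nonneg (div_nonneg hsum hS.le)]
  calc |(μ d : ℝ)| / s.nu d * ((∑ l ∈ D with d ∣ l, s.selbergTerms l) / selbergSum s D)
      ≤ 1 / s.nu d * (s.nu d * selbergSum s D / selbergSum s D) := by
        gcongr
        exact sum_selbergTerms_filter_dvd_le hD hclosed hd
    _ = 1 := by field_simp

theorem abs_lambdaSquared_le {d n : ℕ} (hn : n ≠ 0) (hd : d ∣ n) (w : ℕ → ℝ) :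
    |lambdaSquared w d| ≤ ∑ d₁ ∈ n.divisors, ∑ d₂ ∈ n.divisors,
      if d = d₁.lcm d₂ then |w d₁| * |w d₂| else 0 := by
  have hsub : d.divisors ⊆ n.divisors := Nat.divisors_subset_of_dvd hn hd
  have hnonneg (d₁ d₂ : ℕ) : 0 ≤ if d = d₁.lcm d₂ then |w d₁| * |w d₂| else 0 := by positivity
  calc |lambdaSquared w d|
      ≤ ∑ d₁ ∈ d.divisors, ∑ d₂ ∈ d.divisors, |if d = d₁.lcm d₂ then w d₁ * w d₂ else 0| :=
        (abs_sum_le_sum_abs _ _).trans (sum_le_sum fun _ _ ↦ abs_sum_le_sum_abs _ _)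
    _ = ∑ d₁ ∈ d.divisors, ∑ d₂ ∈ d.divisors, if d = d₁.lcm d₂ then |w d₁| * |w d₂| else 0 := by
        simp only [apply_ite abs, abs_mul, abs_zero]
    _ ≤ _ := (sum_le_sum fun d₁ _ ↦
          sum_le_sum_of_subset_of_nonneg hsub fun d₂ _ _ ↦ hnonneg d₁ d₂).trans
        (sum_le_sum_of_subset_of_nonneg hsub fun d₁ _ _ ↦ sum_nonneg fun d₂ _ ↦ hnonneg d₁ d₂)

theorem errSum_lambdaSquared_le (s : BoundingSieve) (w : ℕ → ℝ) :
    s.errSum (lambdaSquared w) ≤ ∑ d₁ ∈ s.prodPrimes.divisors, ∑ d₂ ∈ s.prodPrimes.divisors,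
      |w d₁| * |w d₂| * |s.rem (d₁.lcm d₂)| := by
  calc s.errSum (lambdaSquared w)
      ≤ ∑ d ∈ s.prodPrimes.divisors, ∑ d₁ ∈ s.prodPrimes.divisors, ∑ d₂ ∈ s.prodPrimes.divisors,
          if d = d₁.lcm d₂ then |w d₁| * |w d₂| * |s.rem d| else 0 := by
        refine sum_le_sum fun d hd ↦ ?_
        simpa only [sum_mul, ite_mul, zero_mul] using mul_le_mul_of_nonneg_right
          (abs_lambdaSquared_le prodPrimes_ne_zero (Nat.dvd_of_mem_divisors hd) w)
          (abs_nonneg (s.rem d))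
    _ = ∑ d₁ ∈ s.prodPrimes.divisors, ∑ d₂ ∈ s.prodPrimes.divisors, ∑ d ∈ s.prodPrimes.divisors,
          if d = d₁.lcm d₂ then |w d₁| * |w d₂| * |s.rem d| else 0 := by
        rw [sum_comm]
        exact sum_congr rfl fun _ _ ↦ sum_comm
    _ = _ := by
        refine sum_congr rfl fun d₁ h₁ ↦ sum_congr rfl fun d₂ h₂ ↦ ?_
        rw [sum_ite_eq_of_mem']
        exact Nat.mem_divisors.2 ⟨Nat.lcm_dvd (Nat.dvd_of_mem_divisors h₁)
          (Nat.dvd_of_mem_divisors h₂), prodPrimes_ne_zero⟩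

theorem siftedSum_le_totalMass_div_selbergSum_add (hD : D ⊆ s.prodPrimes.divisors)
    (hne : D.Nonempty) (hclosed : ∀ ⦃l⦄, l ∈ D → ∀ ⦃d⦄, d ∣ l → d ∈ D) :
    s.siftedSum ≤ s.totalMass / selbergSum s D + ∑ d₁ ∈ D, ∑ d₂ ∈ D, |s.rem (d₁.lcm d₂)| := by
  let w := selbergWeight s D
  have hw {d : ℕ} (hd : d ∈ s.prodPrimes.divisors) : |w d| ≤ if d ∈ D then 1 else 0 := by
    split_ifs with h
    · exact abs_selbergWeight_le_one hD hne hclosed (Nat.dvd_of_mem_divisors hd)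
    · simp [w, selbergWeight_eq_zero hclosed h]
  have error_le : s.errSum (lambdaSquared w) ≤ ∑ d₁ ∈ D, ∑ d₂ ∈ D, |s.rem (d₁.lcm d₂)| := by
    calc s.errSum (lambdaSquared w)
        ≤ ∑ d₁ ∈ s.prodPrimes.divisors, ∑ d₂ ∈ s.prodPrimes.divisors,
            |w d₁| * |w d₂| * |s.rem (d₁.lcm d₂)| := errSum_lambdaSquared_le s w
      _ ≤ ∑ d₁ ∈ s.prodPrimes.divisors, ∑ d₂ ∈ s.prodPrimes.divisors,
            (if d₁ ∈ D then 1 else 0) * (if d₂ ∈ D then 1 else 0) * |s.rem (d₁.lcm d₂)| := by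
          gcongr with d₁ h₁ d₂ h₂
          exacts [hw h₁, hw h₂]
      _ = ∑ d₁ ∈ D, ∑ d₂ ∈ D, |s.rem (d₁.lcm d₂)| := by
          simp only [ite_mul, one_mul, zero_mul, ← ite_sum_zero, sum_ite_mem,
            inter_eq_right.2 hD]
  calc s.siftedSum ≤ s.totalMass * s.mainSum (lambdaSquared w) + s.errSum (lambdaSquared w) :=
        siftedSum_le_mainSum_errSum_of_upperMoebius _
          (upperMoebius_lambdaSquared w (selbergWeight_one hD hne))
    _ ≤ s.totalMass / selbergSum s D + ∑ d₁ ∈ D, ∑ d₂ ∈ D, |s.rem (d₁.lcm d₂)| := by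
        rw [mainSum_lambdaSquared_selbergWeight hD hne, mul_one_div]
        gcongr

end SelbergSieve

/-! ### A lower bound for the Selberg sum -/

theorem prod_primeFactors_inv_one_sub_inv {n : ℕ} (hn : n ≠ 0) :
    ∏ p ∈ n.primeFactors, (1 - (p : ℝ)⁻¹)⁻¹ = n / n.totient := by
  have htot : (n.totient : ℝ) = n * ∏ p ∈ n.primeFactors, (1 - (p : ℝ)⁻¹) := by
    rw [← Rat.cast_natCast, Nat.totient_eq_mul_prod_factors]
    push_cast
    rfl
  rw [prod_inv_distrib, htot, div_mul_cancel_left₀ (Nat.cast_ne_zero.2 hn)]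

theorem sum_inv_le_div_totient {N : ℕ} (hN : N ≠ 0) {T : Finset ℕ}
    (hT : ∀ m ∈ T, m ∈ Nat.factoredNumbers N.primeFactors) :
    ∑ m ∈ T, (m : ℝ)⁻¹ ≤ N / N.totient := by
  let inv : ℕ →* ℝ := ⟨⟨fun n ↦ (n : ℝ)⁻¹, by simp⟩, fun a b ↦ by simp [mul_comm]⟩
  have euler := (EulerProduct.summable_and_hasSum_factoredNumbers_prod_filter_prime_geometric
    (f := inv) (fun {p} hp ↦ by
      simpa [inv] using inv_lt_one_of_one_lt₀ (Nat.one_lt_cast (α := ℝ).2 hp.one_lt))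
    N.primeFactors).2
  rw [filter_true_of_mem fun p hp ↦ Nat.prime_of_mem_primeFactors hp] at euler
  rw [← prod_primeFactors_inv_one_sub_inv hN, ← sum_subtype_of_mem (fun m : ℕ ↦ (m : ℝ)⁻¹) hT]
  exact sum_le_hasSum _ (fun m _ ↦ inv_nonneg.2 (Nat.cast_nonneg (m : ℕ))) euler

theorem squarefree_prod_primes {s : Finset ℕ} (hs : ∀ p ∈ s, p.Prime) :
    Squarefree (∏ p ∈ s, p) := by
  refine squarefree_prod_of_pairwise_isCoprime (fun p hp q hq hpq ↦ ?_)
    fun p hp ↦ (hs p hp).prime.squarefree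
  exact Nat.coprime_iff_isRelPrime.1 ((Nat.coprime_primes (hs p hp) (hs q hq)).2 hpq)

/-- The largest squarefree divisor of `n` coprime to `q`, for nonzero `n` and `q`; sorting the
`n ≤ R` by it turns the harmonic sum into the Selberg sum. -/
def coprimeRadical (q n : ℕ) : ℕ := ∏ p ∈ n.primeFactors \ q.primeFactors, p

theorem primeFactors_coprimeRadical (q n : ℕ) :
    (coprimeRadical q n).primeFactors = n.primeFactors \ q.primeFactors :=
  Nat.primeFactors_prod fun _ hp ↦ Nat.prime_of_mem_primeFactors (mem_sdiff.1 hp).1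

theorem coprimeRadical_dvd (q n : ℕ) : coprimeRadical q n ∣ n :=
  (prod_dvd_prod_of_subset _ _ _ sdiff_subset).trans (Nat.prod_primeFactors_dvd n)

theorem squarefree_coprimeRadical (q n : ℕ) : Squarefree (coprimeRadical q n) :=
  squarefree_prod_primes fun _ hp ↦ Nat.prime_of_mem_primeFactors (mem_sdiff.1 hp).1

theorem coprime_coprimeRadical {q : ℕ} (hq : q ≠ 0) (n : ℕ) : (coprimeRadical q n).Coprime q := by
  rw [← Nat.disjoint_primeFactors (squarefree_coprimeRadical q n).ne_zero hq,
    primeFactors_coprimeRadical]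
  exact sdiff_disjoint

theorem div_coprimeRadical_mem_factoredNumbers {q n : ℕ} (hq : q ≠ 0) (hn : n ≠ 0) :
    n / coprimeRadical q n ∈ Nat.factoredNumbers (coprimeRadical q n * q).primeFactors := by
  have hr := (squarefree_coprimeRadical q n).ne_zero
  have hdvd := coprimeRadical_dvd q n
  refine Nat.mem_factoredNumbers_iff_primeFactors_subset.2 ⟨(Nat.div_ne_zero_iff_of_dvd hdvd).2
    ⟨hn, hr⟩, ?_⟩
  rw [Nat.primeFactors_mul hr hq, primeFactors_coprimeRadical, sdiff_union_self_eq_union]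
  exact (Nat.primeFactors_mono (Nat.div_dvd_of_dvd hdvd) hn).trans subset_union_left

theorem sum_inv_filter_coprimeRadical_le {q : ℕ} (hq : q ≠ 0) {l : ℕ} (hl : l.Coprime q)
    {T : Finset ℕ} (hT : 0 ∉ T) :
    ∑ n ∈ T with coprimeRadical q n = l, (n : ℝ)⁻¹ ≤ q / q.totient * (l.totient : ℝ)⁻¹ := by
  rcases eq_or_ne l 0 with rfl | hl0
  · rw [filter_false_of_mem fun n _ ↦ (squarefree_coprimeRadical q n).ne_zero]
    simp
  have split_off {n : ℕ} (hn : n ∈ {n ∈ T | coprimeRadical q n = l}) : l * (n / l) = n := by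
    rw [← (mem_filter.1 hn).2]
    exact Nat.mul_div_cancel' (coprimeRadical_dvd q n)
  have hinj : Set.InjOn (· / l) ({n ∈ T | coprimeRadical q n = l} : Finset ℕ) :=
    fun m hm n hn h ↦ (split_off hm).symm.trans ((congrArg (l * ·) h).trans (split_off hn))
  have hl' : (l : ℝ) ≠ 0 := Nat.cast_ne_zero.2 hl0
  calc ∑ n ∈ T with coprimeRadical q n = l, (n : ℝ)⁻¹
      = (l : ℝ)⁻¹ * ∑ m ∈ {n ∈ T | coprimeRadical q n = l}.image (· / l), (m : ℝ)⁻¹ := by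
        rw [sum_image hinj, mul_sum]
        refine sum_congr rfl fun n hn ↦ ?_
        rw [← mul_inv, ← Nat.cast_mul, split_off hn]
    _ ≤ (l : ℝ)⁻¹ * ((l * q : ℕ) / (l * q).totient) := by
        gcongr
        refine sum_inv_le_div_totient (mul_ne_zero hl0 hq) fun m hm ↦ ?_
        obtain ⟨n, hn, rfl⟩ := mem_image.1 hm
        obtain ⟨hnT, rfl⟩ := mem_filter.1 hn
        exact div_coprimeRadical_mem_factoredNumbers hq fun h ↦ hT (h ▸ hnT)
    _ = q / q.totient * (l.totient : ℝ)⁻¹ := by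
        rw [Nat.totient_mul hl]
        push_cast
        field_simp

/-- The squarefree numbers up to `R` coprime to `q`: the moduli of the Selberg sieve. -/
def squarefreeCoprimeLE (q R : ℕ) : Finset ℕ := {l ∈ Ioc 0 R | Squarefree l ∧ l.Coprime q}

theorem log_le_div_totient_mul_sum_inv_totient {q : ℕ} (hq : q ≠ 0) (R : ℕ) :
    Real.log R ≤ q / q.totient *
      ∑ l ∈ squarefreeCoprimeLE q R, (l.totient : ℝ)⁻¹ := by
  have hmaps : ∀ n ∈ Ioc 0 R, coprimeRadical q n ∈ squarefreeCoprimeLE q R := by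
    intro n hn
    have hsq := squarefree_coprimeRadical q n
    have hle := Nat.le_of_dvd (mem_Ioc.1 hn).1 (coprimeRadical_dvd q n)
    exact mem_filter.2 ⟨mem_Ioc.2 ⟨Nat.pos_of_ne_zero hsq.ne_zero, hle.trans (mem_Ioc.1 hn).2⟩,
      hsq, coprime_coprimeRadical hq n⟩
  calc Real.log R ≤ ∑ n ∈ Ioc 0 R, (n : ℝ)⁻¹ := by
        rcases R.eq_zero_or_pos with rfl | hR
        · simp
        have := log_add_one_le_harmonic R
        rw [harmonic_eq_sum_Icc] at this
        push_cast at this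
        exact (Real.log_le_log (by positivity) (by simp)).trans this
    _ = ∑ l ∈ squarefreeCoprimeLE q R,
          ∑ n ∈ Ioc 0 R with coprimeRadical q n = l, (n : ℝ)⁻¹ :=
        (sum_fiberwise_of_maps_to hmaps _).symm
    _ ≤ ∑ l ∈ squarefreeCoprimeLE q R, q / q.totient * (l.totient : ℝ)⁻¹ :=
        sum_le_sum fun l hl ↦
          sum_inv_filter_coprimeRadical_le hq (mem_filter.1 hl).2.2 (by simp)
    _ = _ := (mul_sum ..).symm

/-! ### The Brun–Titchmarsh inequality -/

theorem abs_card_Ioc_filter_modEq_sub_div_le_one (N : ℕ) {q : ℕ} (hq : 0 < q) (a : ℕ) :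
    |(#{n ∈ Ioc 0 N | n ≡ a [MOD q]} : ℝ) - N / q| ≤ 1 := by
  have hmono : ⌊((0 : ℕ) - a : ℚ) / q⌋ ≤ ⌊(N - a : ℚ) / q⌋ := by gcongr; exact N.zero_le
  have card_eq := congrArg (Int.cast : ℤ → ℚ) (Nat.Ioc_filter_modEq_card 0 N hq a)
  rw [max_eq_left (by linarith)] at card_eq
  push_cast at card_eq
  have hdiv : (N - a : ℚ) / q - (0 - a) / q = N / q := by ring
  have key : |(#{n ∈ Ioc 0 N | n ≡ a [MOD q]} : ℚ) - N / q| ≤ 1 := by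
    rw [card_eq, abs_le]
    constructor <;> linarith [Int.floor_le ((N - a : ℚ) / q), Int.floor_le ((0 - a : ℚ) / q),
      Int.lt_floor_add_one ((N - a : ℚ) / q), Int.lt_floor_add_one ((0 - a : ℚ) / q)]
  simpa using (Rat.cast_le (K := ℝ)).2 key

/-- The arithmetic function `n ↦ 1/n`, with value `0` at `0`. -/
noncomputable def reciprocal : ArithmeticFunction ℝ := ⟨fun n ↦ (n : ℝ)⁻¹, by simp⟩

theorem reciprocal_isMultiplicative : reciprocal.IsMultiplicative :=
  ⟨by simp [reciprocal], fun _ ↦ by simp [reciprocal, mul_comm]⟩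

/-- The product of the primes `p ≤ R` not dividing `q`. -/
def coprimePrimorial (q R : ℕ) : ℕ := ∏ p ∈ Nat.primesLE R with ¬p ∣ q, p

theorem squarefree_coprimePrimorial (q R : ℕ) : Squarefree (coprimePrimorial q R) :=
  squarefree_prod_primes fun _ hp ↦ (Nat.mem_primesLE.1 (mem_filter.1 hp).1).2

theorem coprime_coprimePrimorial (q R : ℕ) : (coprimePrimorial q R).Coprime q :=
  Nat.Coprime.prod_left fun p hp ↦ by
    rw [mem_filter, Nat.mem_primesLE] at hp
    exact hp.1.2.coprime_iff_not_dvd.2 hp.2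

theorem le_of_prime_dvd_coprimePrimorial {q R p : ℕ} (hp : p.Prime)
    (h : p ∣ coprimePrimorial q R) : p ≤ R := by
  obtain ⟨r, hr, hpr⟩ := hp.prime.exists_mem_finset_dvd h
  rw [mem_filter, Nat.mem_primesLE] at hr
  exact (Nat.le_of_dvd hr.1.2.pos hpr).trans hr.1.1

theorem dvd_coprimePrimorial {q R l : ℕ} (hlR : l ≤ R) (hl : Squarefree l) (hlq : l.Coprime q) :
    l ∣ coprimePrimorial q R := by
  rw [← Nat.prod_primeFactors_of_squarefree hl, coprimePrimorial]
  refine prod_dvd_prod_of_subset _ _ _ fun p hp ↦ ?_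
  have hpp := Nat.prime_of_mem_primeFactors hp
  have hpl := Nat.dvd_of_mem_primeFactors hp
  rw [mem_filter, Nat.mem_primesLE]
  exact ⟨⟨(Nat.le_of_dvd (Nat.pos_of_ne_zero hl.ne_zero) hpl).trans hlR, hpp⟩,
    hpp.coprime_iff_not_dvd.1 (hlq.coprime_dvd_left hpl)⟩

/-- The sieve of `{n ≤ N : n ≡ a mod q}` by the primes `p ≤ R` not dividing `q`. -/
noncomputable def progressionSieve (N q a R : ℕ) : BoundingSieve where
  support := {n ∈ Ioc 0 N | n ≡ a [MOD q]}
  prodPrimes := coprimePrimorial q R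
  prodPrimes_squarefree := squarefree_coprimePrimorial q R
  weights := 1
  weights_nonneg _ := zero_le_one
  totalMass := N / q
  nu := reciprocal
  nu_mult := reciprocal_isMultiplicative
  nu_pos_of_prime _ hp _ := inv_pos.2 (Nat.cast_pos.2 hp.pos)
  nu_lt_one_of_prime _ hp _ := inv_lt_one_of_one_lt₀ (Nat.one_lt_cast.2 hp.one_lt)

theorem selbergTerms_progressionSieve (N q a R : ℕ) {l : ℕ} (hl : l ≠ 0) :
    (progressionSieve N q a R).selbergTerms l = (l.totient : ℝ)⁻¹ := by
  have hl' : (l : ℝ) ≠ 0 := Nat.cast_ne_zero.2 hl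
  rw [selbergTerms_apply]
  change (l : ℝ)⁻¹ * ∏ p ∈ l.primeFactors, (1 - (p : ℝ)⁻¹)⁻¹ = _
  rw [prod_primeFactors_inv_one_sub_inv hl]
  field_simp

theorem abs_rem_progressionSieve_le_one (N : ℕ) {q : ℕ} (hq : q ≠ 0) (a R : ℕ) {d : ℕ}
    (hd : d ∣ coprimePrimorial q R) : |(progressionSieve N q a R).rem d| ≤ 1 := by
  have hd0 : 0 < d := Nat.pos_of_ne_zero
    ((squarefree_coprimePrimorial q R).squarefree_of_dvd hd).ne_zero
  have hcop : q.Coprime d := ((coprime_coprimePrimorial q R).coprime_dvd_left hd).symm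
  obtain ⟨v, hva, hv0⟩ := Nat.chineseRemainder hcop a 0
  have residue_class : {n ∈ Ioc 0 N | n ≡ a [MOD q] ∧ d ∣ n} =
      {n ∈ Ioc 0 N | n ≡ v [MOD q * d]} := by
    refine filter_congr fun n _ ↦ ?_
    rw [← Nat.modEq_and_modEq_iff_modEq_mul hcop, ← Nat.modEq_zero_iff_dvd]
    exact and_congr ⟨fun h ↦ h.trans hva.symm, fun h ↦ h.trans hva⟩
      ⟨fun h ↦ h.trans hv0.symm, fun h ↦ h.trans hv0⟩
  have rem_eq : (progressionSieve N q a R).rem d =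
      #{n ∈ Ioc 0 N | n ≡ v [MOD q * d]} - N / (q * d : ℕ) := by
    change (∑ n ∈ Ioc 0 N with n ≡ a [MOD q], if d ∣ n then (1 : ℝ) else 0) -
      (d : ℝ)⁻¹ * (N / q) = _
    rw [sum_boole, filter_filter, residue_class]
    push_cast
    ring
  rw [rem_eq]
  exact abs_card_Ioc_filter_modEq_sub_div_le_one N (mul_pos (Nat.pos_of_ne_zero hq) hd0) v

theorem squarefreeCoprimeLE_subset_divisors (q R : ℕ) :
    squarefreeCoprimeLE q R ⊆ (coprimePrimorial q R).divisors := fun l hl ↦ by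
  obtain ⟨hl, hsq, hcop⟩ := mem_filter.1 hl
  exact Nat.mem_divisors.2 ⟨dvd_coprimePrimorial (mem_Ioc.1 hl).2 hsq hcop,
    (squarefree_coprimePrimorial q R).ne_zero⟩

theorem mem_squarefreeCoprimeLE_of_dvd {q R l d : ℕ} (hl : l ∈ squarefreeCoprimeLE q R)
    (hdl : d ∣ l) : d ∈ squarefreeCoprimeLE q R := by
  simp only [squarefreeCoprimeLE, mem_filter, mem_Ioc] at hl ⊢
  exact ⟨⟨Nat.pos_of_dvd_of_pos hdl hl.1.1, (Nat.le_of_dvd hl.1.1 hdl).trans hl.1.2⟩,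
    hl.2.1.squarefree_of_dvd hdl, hl.2.2.coprime_dvd_left hdl⟩

theorem log_le_mul_selbergSum_progressionSieve (N : ℕ) {q : ℕ} (hq : q ≠ 0) (a R : ℕ) :
    Real.log R ≤
      q / q.totient * selbergSum (progressionSieve N q a R) (squarefreeCoprimeLE q R) := by
  have sum_eq : selbergSum (progressionSieve N q a R) (squarefreeCoprimeLE q R) =
      ∑ l ∈ squarefreeCoprimeLE q R, (l.totient : ℝ)⁻¹ := sum_congr rfl fun l hl ↦
    selbergTerms_progressionSieve N q a R (mem_Ioc.1 (mem_filter.1 hl).1).1.ne'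
  rw [sum_eq]
  exact log_le_div_totient_mul_sum_inv_totient hq R

theorem siftedSum_progressionSieve_le (N : ℕ) {q : ℕ} (hq : q ≠ 0) (a : ℕ) {R : ℕ} (hR : 2 ≤ R) :
    (progressionSieve N q a R).siftedSum ≤ N / (q.totient * Real.log R) + R ^ 2 := by
  let s := progressionSieve N q a R
  let D := squarefreeCoprimeLE q R
  have hD : D ⊆ s.prodPrimes.divisors := squarefreeCoprimeLE_subset_divisors q R
  have hne : D.Nonempty := ⟨1, by simp [D, squarefreeCoprimeLE]; lia⟩
  have error_le : ∑ d₁ ∈ D, ∑ d₂ ∈ D, |s.rem (d₁.lcm d₂)| ≤ (R : ℝ) ^ 2 := by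
    have card_le : (#D : ℝ) ≤ R := by
      exact_mod_cast (card_filter_le _ _).trans (Nat.card_Ioc 0 R).le
    calc ∑ d₁ ∈ D, ∑ d₂ ∈ D, |s.rem (d₁.lcm d₂)| ≤ ∑ _ ∈ D, ∑ _ ∈ D, (1 : ℝ) := by
          gcongr with d₁ h₁ d₂ h₂
          exact abs_rem_progressionSieve_le_one N hq a R (Nat.lcm_dvd
            (Nat.dvd_of_mem_divisors (hD h₁)) (Nat.dvd_of_mem_divisors (hD h₂)))
      _ = (#D : ℝ) ^ 2 := by simp [sq]
      _ ≤ (R : ℝ) ^ 2 := by gcongr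
  have main_le : (N / q : ℝ) / selbergSum s D ≤ N / (q.totient * Real.log R) := by
    have hlog : 0 < Real.log R := Real.log_pos (by exact_mod_cast hR)
    have hφ : (0 : ℝ) < q.totient := Nat.cast_pos.2 (Nat.totient_pos.2 (Nat.pos_of_ne_zero hq))
    rw [div_div]
    refine div_le_div_of_nonneg_left N.cast_nonneg (mul_pos hφ hlog) ?_
    calc q.totient * Real.log R ≤ q.totient * (q / q.totient * selbergSum s D) := by
          gcongr
          exact log_le_mul_selbergSum_progressionSieve N hq a R
      _ = q * selbergSum s D := by rw [← mul_assoc, mul_div_cancel₀ _ hφ.ne']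
  exact (siftedSum_le_totalMass_div_selbergSum_add hD hne fun _ hl _ hdl ↦
    mem_squarefreeCoprimeLE_of_dvd hl hdl).trans (add_le_add main_le error_le)

theorem card_primes_modEq_le_sieve (N : ℕ) {q : ℕ} (hq : q ≠ 0) (a : ℕ) {R : ℕ} (hR : 2 ≤ R) :
    (#{p ∈ Nat.primesLE N | p ≡ a [MOD q]} : ℝ) ≤
      N / (q.totient * Real.log R) + R ^ 2 + R := by
  let s := progressionSieve N q a R
  have hsub : {p ∈ Nat.primesLE N | p ≡ a [MOD q]} ⊆
      {n ∈ s.support | s.prodPrimes.Coprime n} ∪ Ioc 0 R := by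
    intro p hp
    rw [mem_filter, Nat.mem_primesLE] at hp
    obtain ⟨⟨hpN, hp⟩, hpa⟩ := hp
    simp only [s, progressionSieve, mem_union, mem_filter, mem_Ioc, hp.pos, hpN, hpa, true_and]
    by_cases hpR : p ≤ R
    · exact .inr hpR
    · exact .inl (hp.coprime_iff_not_dvd.2 fun h ↦ hpR (le_of_prime_dvd_coprimePrimorial hp h)).symm
  have sifted_eq : s.siftedSum = #{n ∈ s.support | s.prodPrimes.Coprime n} :=
    sum_boole _ _
  have card_le : (#{p ∈ Nat.primesLE N | p ≡ a [MOD q]} : ℝ) ≤ s.siftedSum + R := by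
    rw [sifted_eq]
    have := (card_le_card hsub).trans (card_union_le _ _)
    rw [Nat.card_Ioc, Nat.sub_zero] at this
    exact_mod_cast this
  linarith [siftedSum_progressionSieve_le N hq a hR]

theorem log_le_two_mul_log_floor {t : ℝ} (ht : 2 ≤ t) :
    Real.log t ≤ 2 * Real.log ⌊t⌋₊ := by
  have floor_ge : (2 : ℝ) ≤ ⌊t⌋₊ := by exact_mod_cast Nat.le_floor (n := 2) ht
  rw [← Real.log_rpow (by linarith), Real.rpow_two]
  exact Real.log_le_log (by linarith) (by nlinarith [Nat.lt_floor_add_one t])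

/-- The **Brun–Titchmarsh inequality**, without the sharp constant. -/
theorem card_primes_modEq_le {x : ℝ} (hx : 256 ≤ x) {q : ℕ} (hq : q ≠ 0) (hqx : q ≤ √x) (a : ℕ) :
    (#{p ∈ Nat.primesLE ⌊x⌋₊ | p ≡ a [MOD q]} : ℝ) ≤ 24 * x / (q.totient * Real.log x) := by
  obtain ⟨t, ht, rfl⟩ : ∃ t : ℝ, 2 ≤ t ∧ t ^ 8 = x := by
    refine ⟨x ^ (8 : ℝ)⁻¹, ?_, ?_⟩
    · rw [Real.le_rpow_inv_iff_of_pos] <;> norm_num <;> linarith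
    · rw [← Real.rpow_natCast, ← Real.rpow_mul (by linarith)]
      norm_num
  let R := ⌊t⌋₊
  have hR : 2 ≤ R := Nat.le_floor ht
  have hRt : (R : ℝ) ≤ t := Nat.floor_le (by linarith)
  have hlogt : 0 < Real.log t := Real.log_pos (by linarith)
  have hφ : (0 : ℝ) < q.totient := Nat.cast_pos.2 (Nat.totient_pos.2 (Nat.pos_of_ne_zero hq))
  have totient_le : (q.totient : ℝ) ≤ t ^ 4 := by
    rw [show t ^ 8 = (t ^ 4) ^ 2 by ring, Real.sqrt_sq (by positivity)] at hqx
    exact (Nat.cast_le.2 (Nat.totient_le q)).trans hqx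
  have main_le : ⌊t ^ 8⌋₊ / (q.totient * Real.log R) ≤
      2 * t ^ 8 / (q.totient * Real.log t) := by
    calc ⌊t ^ 8⌋₊ / (q.totient * Real.log R) ≤ t ^ 8 / (q.totient * (Real.log t / 2)) := by
          gcongr
          · exact Nat.floor_le (by positivity)
          · linarith [log_le_two_mul_log_floor ht]
      _ = 2 * t ^ 8 / (q.totient * Real.log t) := by field_simp
  have error_le : (R : ℝ) ^ 2 + R ≤ t ^ 8 / (q.totient * Real.log t) := by
    rw [le_div_iff₀ (by positivity)]
    calc ((R : ℝ) ^ 2 + R) * (q.totient * Real.log t) ≤ (t ^ 2 + t) * (t ^ 4 * (t - 1)) := by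
          gcongr
          exact Real.log_le_sub_one_of_pos (by linarith)
      _ = t ^ 5 * (t ^ 2 - 1) := by ring
      _ ≤ t ^ 5 * t ^ 3 := by gcongr; nlinarith [sq_nonneg t]
      _ = t ^ 8 := by ring
  calc (#{p ∈ Nat.primesLE ⌊t ^ 8⌋₊ | p ≡ a [MOD q]} : ℝ)
      ≤ 2 * t ^ 8 / (q.totient * Real.log t) + t ^ 8 / (q.totient * Real.log t) := by
        linarith [card_primes_modEq_le_sieve ⌊t ^ 8⌋₊ hq a hR]
    _ = 24 * t ^ 8 / (q.totient * Real.log (t ^ 8)) := by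
        rw [Real.log_pow]
        push_cast
        field_simp
        norm_num

/-! ### Sums over primes in residue classes -/

theorem sum_log_div_sq_le_of_le_two_mul {s : Finset ℕ} (hs : ∀ p ∈ s, p.Prime) {u : ℝ}
    (hu : 0 < u) (hlt : ∀ p ∈ s, u < p) (hle : ∀ p ∈ s, (p : ℝ) ≤ 2 * u) :
    ∑ p ∈ s, Real.log p / (p : ℝ) ^ 2 ≤ 2 * Real.log 4 / u := by
  have hsub : s ⊆ {p ∈ Ioc 0 ⌊2 * u⌋₊ | p.Prime} := fun p hp ↦
    mem_filter.2 ⟨mem_Ioc.2 ⟨(hs p hp).pos, Nat.le_floor (hle p hp)⟩, hs p hp⟩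
  calc ∑ p ∈ s, Real.log p / (p : ℝ) ^ 2 ≤ ∑ p ∈ s, Real.log p / u ^ 2 := by
        gcongr with p hp
        exact (hlt p hp).le
    _ = (∑ p ∈ s, Real.log p) / u ^ 2 := (sum_div ..).symm
    _ ≤ Chebyshev.theta (2 * u) / u ^ 2 := by
        gcongr
        exact sum_le_sum_of_subset_of_nonneg hsub fun p _ _ ↦ Real.log_natCast_nonneg p
    _ ≤ Real.log 4 * (2 * u) / u ^ 2 := by
        gcongr
        exact Chebyshev.theta_le_log4_mul_x (by positivity)
    _ = 2 * Real.log 4 / u := by field_simp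

theorem sum_log_div_sq_le_of_le_two_pow_mul (k : ℕ) {s : Finset ℕ} (hs : ∀ p ∈ s, p.Prime) {u : ℝ}
    (hu : 0 < u) (hlt : ∀ p ∈ s, u < p) (hle : ∀ p ∈ s, (p : ℝ) ≤ 2 ^ k * u) :
    ∑ p ∈ s, Real.log p / (p : ℝ) ^ 2 ≤ 4 * Real.log 4 / u := by
  induction k generalizing s u with
  | zero =>
    have hempty : s = ∅ := eq_empty_of_forall_notMem fun p hp ↦ by linarith [hlt p hp, hle p hp]
    rw [hempty, sum_empty]
    positivity
  | succ k ih =>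
    have low : ∑ p ∈ s with ((p : ℕ) : ℝ) ≤ 2 * u, Real.log p / (p : ℝ) ^ 2 ≤ 2 * Real.log 4 / u :=
      sum_log_div_sq_le_of_le_two_mul (fun p hp ↦ hs p (mem_filter.1 hp).1) hu
        (fun p hp ↦ hlt p (mem_filter.1 hp).1) fun p hp ↦ (mem_filter.1 hp).2
    have high : ∑ p ∈ s with ¬((p : ℕ) : ℝ) ≤ 2 * u, Real.log p / (p : ℝ) ^ 2 ≤
        4 * Real.log 4 / (2 * u) :=
      ih (fun p hp ↦ hs p (mem_filter.1 hp).1) (by positivity)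
        (fun p hp ↦ not_le.1 (mem_filter.1 hp).2)
        fun p hp ↦ (hle p (mem_filter.1 hp).1).trans_eq (by ring)
    calc ∑ p ∈ s, Real.log p / (p : ℝ) ^ 2
        ≤ 2 * Real.log 4 / u + 4 * Real.log 4 / (2 * u) := by
          rw [← sum_filter_add_sum_filter_not s fun p : ℕ ↦ (p : ℝ) ≤ 2 * u]
          exact add_le_add low high
      _ = 4 * Real.log 4 / u := by field_simp; norm_num

theorem sum_inv_sq_primes_le {s : Finset ℕ} (hs : ∀ p ∈ s, p.Prime) {u : ℝ} (hu : 1 < u)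
    (hlt : ∀ p ∈ s, u < p) : ∑ p ∈ s, 1 / (p : ℝ) ^ 2 ≤ 8 / (u * Real.log u) := by
  have hlogu : 0 < Real.log u := Real.log_pos hu
  have log_four_le : Real.log 4 ≤ 2 := by
    rw [show (4 : ℝ) = 2 ^ 2 by norm_num, Real.log_pow]
    norm_num
    linarith [Real.log_two_lt_d9]
  have le_two_pow : ∀ p ∈ s, (p : ℝ) ≤ 2 ^ s.sup id * u := fun p hp ↦ by
    have hp : p ≤ 2 ^ s.sup id := (le_sup (f := id) hp).trans Nat.lt_two_pow_self.le
    have hp' : (p : ℝ) ≤ 2 ^ s.sup id := by exact_mod_cast hp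
    exact hp'.trans (le_mul_of_one_le_right (by positivity) hu.le)
  calc ∑ p ∈ s, 1 / (p : ℝ) ^ 2 ≤ ∑ p ∈ s, Real.log p / (p : ℝ) ^ 2 / Real.log u := by
        refine sum_le_sum fun p hp ↦ ?_
        rw [div_right_comm]
        exact div_le_div_of_nonneg_right ((one_le_div hlogu).2
          (Real.log_le_log (by linarith) (hlt p hp).le)) (by positivity)
    _ = (∑ p ∈ s, Real.log p / (p : ℝ) ^ 2) / Real.log u := (sum_div ..).symm
    _ ≤ 4 * Real.log 4 / u / Real.log u := by
        gcongr
        exact sum_log_div_sq_le_of_le_two_pow_mul _ hs (by linarith) hlt le_two_pow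
    _ ≤ 4 * 2 / u / Real.log u := by gcongr
    _ = 8 / (u * Real.log u) := by rw [div_div]; norm_num

theorem card_primes_modEq_prime_le {x : ℝ} (hx : 256 ≤ x) {r : ℕ} (hr : r.Prime) (hrx : r ≤ √x)
    (a : ℕ) : (#{p ∈ Nat.primesLE ⌊x⌋₊ | p ≡ a [MOD r]} : ℝ) ≤ 48 * x / (r * Real.log x) := by
  have hlog : 0 < Real.log x := Real.log_pos (by linarith)
  have hr2 : (2 : ℝ) ≤ r := by exact_mod_cast hr.two_le
  have half_le_totient : (r : ℝ) / 2 ≤ r.totient := by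
    rw [Nat.totient_prime hr, Nat.cast_pred hr.pos]
    linarith
  calc (#{p ∈ Nat.primesLE ⌊x⌋₊ | p ≡ a [MOD r]} : ℝ)
      ≤ 24 * x / (r.totient * Real.log x) := card_primes_modEq_le hx hr.ne_zero hrx a
    _ ≤ 24 * x / (r / 2 * Real.log x) := by gcongr
    _ = 48 * x / (r * Real.log x) := by field_simp; norm_num

theorem card_primes_modEq_le_three_mul_div {x : ℝ} {r : ℕ} (hr : 0 < r) (hrx : r ≤ 2 * x) (a : ℕ) :
    (#{p ∈ Nat.primesLE ⌊x⌋₊ | p ≡ a [MOD r]} : ℝ) ≤ 3 * x / r := by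
  have hr' : (0 : ℝ) < r := Nat.cast_pos.2 hr
  have hsub : {p ∈ Nat.primesLE ⌊x⌋₊ | p ≡ a [MOD r]} ⊆ {n ∈ Ioc 0 ⌊x⌋₊ | n ≡ a [MOD r]} := by
    rw [Nat.primesLE_eq_filter_Ioc_zero]
    exact filter_subset_filter _ (filter_subset _ _)
  calc (#{p ∈ Nat.primesLE ⌊x⌋₊ | p ≡ a [MOD r]} : ℝ)
      ≤ #{n ∈ Ioc 0 ⌊x⌋₊ | n ≡ a [MOD r]} := by gcongr
    _ ≤ ⌊x⌋₊ / r + 1 := by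
        linarith [(abs_le.1 (abs_card_Ioc_filter_modEq_sub_div_le_one ⌊x⌋₊ hr a)).2]
    _ ≤ x / r + 2 * x / r := by
        gcongr
        · exact Nat.floor_le (by linarith)
        · exact (one_le_div hr').2 hrx
    _ = 3 * x / r := by ring

theorem sum_card_primes_modEq_div_le_of_le_sqrt {x y : ℝ} (hx : 256 ≤ x) (hy : 1 < y)
    {s : Finset ℕ} (hs : ∀ r ∈ s, r.Prime) (hlt : ∀ r ∈ s, y < r) (hle : ∀ r ∈ s, (r : ℝ) ≤ √x)
    (a : ℕ → ℕ) :
    ∑ r ∈ s, (#{p ∈ Nat.primesLE ⌊x⌋₊ | p ≡ a r [MOD r]} : ℝ) / r ≤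
      384 * x / (Real.log x * (y * Real.log y)) := by
  have hlogx : 0 < Real.log x := Real.log_pos (by linarith)
  calc ∑ r ∈ s, (#{p ∈ Nat.primesLE ⌊x⌋₊ | p ≡ a r [MOD r]} : ℝ) / r
      ≤ ∑ r ∈ s, 48 * x / (r * Real.log x) / r := by
        gcongr with r hr
        exact card_primes_modEq_prime_le hx (hs r hr) (hle r hr) _
    _ = 48 * x / Real.log x * ∑ r ∈ s, 1 / (r : ℝ) ^ 2 := by
        rw [mul_sum]
        exact sum_congr rfl fun r _ ↦ by field_simp
    _ ≤ 48 * x / Real.log x * (8 / (y * Real.log y)) := by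
        gcongr
        exact sum_inv_sq_primes_le hs hy hlt
    _ = 384 * x / (Real.log x * (y * Real.log y)) := by rw [div_mul_div_comm]; ring

theorem sum_card_primes_modEq_div_le_of_sqrt_lt {x : ℝ} (hx : 1 < x) {s : Finset ℕ}
    (hs : ∀ r ∈ s, r.Prime) (hlt : ∀ r ∈ s, √x < r) (hle : ∀ r ∈ s, (r : ℝ) ≤ 2 * x)
    (a : ℕ → ℕ) :
    ∑ r ∈ s, (#{p ∈ Nat.primesLE ⌊x⌋₊ | p ≡ a r [MOD r]} : ℝ) / r ≤
      48 * x / (Real.log x * √x) := by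
  calc ∑ r ∈ s, (#{p ∈ Nat.primesLE ⌊x⌋₊ | p ≡ a r [MOD r]} : ℝ) / r
      ≤ ∑ r ∈ s, 3 * x / r / r := by
        gcongr with r hr
        exact card_primes_modEq_le_three_mul_div (hs r hr).pos (hle r hr) _
    _ = 3 * x * ∑ r ∈ s, 1 / (r : ℝ) ^ 2 := by
        rw [mul_sum]
        exact sum_congr rfl fun r _ ↦ by field_simp
    _ ≤ 3 * x * (8 / (√x * Real.log √x)) := by
        gcongr
        exact sum_inv_sq_primes_le hs (Real.lt_sqrt_of_sq_lt (by linarith)) hlt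
    _ = 48 * x / (Real.log x * √x) := by
        rw [Real.log_sqrt (by linarith)]
        field_simp
        norm_num

theorem sum_card_primes_modEq_div_le {x y : ℝ} (hx : 256 ≤ x) (hy : 1 < y)
    (hyx : y * Real.log y ≤ √x) {s : Finset ℕ} (hs : ∀ r ∈ s, r.Prime) (hlt : ∀ r ∈ s, y < r)
    (hle : ∀ r ∈ s, (r : ℝ) ≤ 2 * x) (a : ℕ → ℕ) :
    ∑ r ∈ s, (#{p ∈ Nat.primesLE ⌊x⌋₊ | p ≡ a r [MOD r]} : ℝ) / r ≤
      432 * x / (Real.log x * (y * Real.log y)) := by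
  have hlogx : 0 < Real.log x := Real.log_pos (by linarith)
  have hlogy : 0 < Real.log y := Real.log_pos hy
  rw [← sum_filter_add_sum_filter_not s fun r : ℕ ↦ (r : ℝ) ≤ √x]
  calc _ ≤ 384 * x / (Real.log x * (y * Real.log y)) + 48 * x / (Real.log x * √x) :=
        add_le_add
          (sum_card_primes_modEq_div_le_of_le_sqrt hx hy (fun r hr ↦ hs r (mem_filter.1 hr).1)
            (fun r hr ↦ hlt r (mem_filter.1 hr).1) (fun r hr ↦ (mem_filter.1 hr).2) a)
          (sum_card_primes_modEq_div_le_of_sqrt_lt (by linarith)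
            (fun r hr ↦ hs r (mem_filter.1 hr).1) (fun r hr ↦ not_le.1 (mem_filter.1 hr).2)
            (fun r hr ↦ hle r (mem_filter.1 hr).1) a)
    _ ≤ 384 * x / (Real.log x * (y * Real.log y)) + 48 * x / (Real.log x * (y * Real.log y)) := by
        gcongr
    _ = 432 * x / (Real.log x * (y * Real.log y)) := by ring

/-! ### The mean of `h_y` over shifted primes -/

theorem hy_nonneg (y : ℝ) (n : ℕ) : 0 ≤ hy y n := sum_nonneg fun _ _ ↦ by positivity

theorem hy_le_sum_ite_dvd (y : ℝ) {n N : ℕ} (hn : n ≤ N) :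
    hy y n ≤ ∑ r ∈ Nat.primesLE N with y < (r : ℕ), if r ∣ n then 1 / (r : ℝ) else 0 := by
  rw [← sum_filter]
  refine sum_le_sum_of_subset_of_nonneg (fun r hr ↦ ?_) fun _ _ _ ↦ by positivity
  simp only [mem_filter, Nat.mem_primeFactors, Nat.mem_primesLE] at hr ⊢
  obtain ⟨⟨hr, hrn, hn0⟩, hyr⟩ := hr
  exact ⟨⟨⟨(Nat.le_of_dvd (Nat.pos_of_ne_zero hn0) hrn).trans hn, hr⟩, hyr⟩, hrn⟩

theorem dvd_natAbs_sub_iff_modEq {r : ℕ} (hr : r ≠ 0) (p : ℕ) (k : ℤ) :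
    r ∣ ((p : ℤ) - k).natAbs ↔ p ≡ (k % r).toNat [MOD r] := by
  rw [← Int.natCast_dvd, ← Int.modEq_iff_dvd, ← Int.natCast_modEq_iff,
    Int.toNat_of_nonneg (Int.emod_nonneg k (Nat.cast_ne_zero.2 hr))]
  exact ⟨fun h ↦ h.symm.trans (Int.mod_modEq k r).symm, fun h ↦ (h.trans (Int.mod_modEq k r)).symm⟩

theorem sum_hy_shifted_primes_le {x y : ℝ} (hx : 256 ≤ x) (hy1 : 1 < y) (hyx : y * Real.log y ≤ √x)
    {k : ℤ} (hk : (|k| : ℝ) ≤ x) :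
    ∑ p ∈ Nat.primesLE ⌊x⌋₊, hy y ((p : ℤ) - k).natAbs ≤
      432 * x / (Real.log x * (y * Real.log y)) := by
  let s := {r ∈ Nat.primesLE ⌊2 * x⌋₊ | y < (r : ℕ)}
  have hs : ∀ r ∈ s, (r.Prime ∧ (r : ℝ) ≤ 2 * x) ∧ y < r := fun r hr ↦ by
    simp only [s, mem_filter, Nat.mem_primesLE, Nat.le_floor_iff (by linarith : 0 ≤ 2 * x)] at hr
    exact ⟨hr.1.symm, hr.2⟩
  have natAbs_le : ∀ p ∈ Nat.primesLE ⌊x⌋₊, ((p : ℤ) - k).natAbs ≤ ⌊2 * x⌋₊ := fun p hp ↦ by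
    have hpx : (p : ℝ) ≤ x := (Nat.le_floor_iff (by linarith)).1 (Nat.mem_primesLE.1 hp).1
    refine Nat.le_floor ?_
    rw [Nat.cast_natAbs, Int.cast_abs, Int.cast_sub, Int.cast_natCast]
    linarith [abs_sub (p : ℝ) k, Nat.abs_cast (R := ℝ) p]
  calc ∑ p ∈ Nat.primesLE ⌊x⌋₊, hy y ((p : ℤ) - k).natAbs
      ≤ ∑ p ∈ Nat.primesLE ⌊x⌋₊, ∑ r ∈ s, if r ∣ ((p : ℤ) - k).natAbs then 1 / (r : ℝ) else 0 :=
        sum_le_sum fun p hp ↦ hy_le_sum_ite_dvd y (natAbs_le p hp)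
    _ = ∑ r ∈ s, (#{p ∈ Nat.primesLE ⌊x⌋₊ | p ≡ (k % r).toNat [MOD r]} : ℝ) / r := by
        rw [sum_comm]
        refine sum_congr rfl fun r hr ↦ ?_
        simp only [dvd_natAbs_sub_iff_modEq (hs r hr).1.1.ne_zero]
        rw [← sum_filter, sum_const, nsmul_eq_mul, mul_one_div]
    _ ≤ 432 * x / (Real.log x * (y * Real.log y)) :=
        sum_card_primes_modEq_div_le hx hy1 hyx (fun r hr ↦ (hs r hr).1.1)
          (fun r hr ↦ (hs r hr).2) (fun r hr ↦ (hs r hr).1.2) fun r ↦ (k % r).toNat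

theorem div_log_le_four_mul_primeCounting {x : ℝ} (hx : 10 ≤ x) :
    x / Real.log x ≤ 4 * (Nat.primeCounting ⌊x⌋₊ : ℝ) := by
  have hlog : 0 < Real.log x := Real.log_pos (by linarith)
  have log_le : Real.log (x + 2) ≤ (x + 2) / 8 - 1 + 3 * Real.log 2 := by
    have h := Real.log_le_sub_one_of_pos (show 0 < (x + 2) / 2 ^ 3 by linarith)
    rw [Real.log_div (by linarith) (by norm_num), Real.log_pow] at h
    norm_num at h
    linarith
  have chebyshev := Chebyshev.pi_ge' (x := x) (by linarith)
  rw [div_le_iff₀ hlog] at chebyshev ⊢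
  nlinarith [Real.log_two_gt_d9, Real.log_two_lt_d9]

/-- The primes `p ≤ x` for which `h_y(|p - k|)` exceeds the threshold `1/(y √(log y))`; the shifts
`k = 1` and `k = -1` give `p - 1` and `p + 1`. -/
noncomputable def inconvenientPrimes (x y : ℝ) (k : ℤ) : Finset ℕ :=
  {p ∈ Nat.primesLE ⌊x⌋₊ | 1 / (y * √(Real.log y)) < hy y ((p : ℤ) - k).natAbs}

theorem card_inconvenientPrimes_le {x y : ℝ} (hx : 256 ≤ x) (hy1 : 1 < y)
    (hyx : y * Real.log y ≤ √x) {k : ℤ} (hk : (|k| : ℝ) ≤ x) :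
    (#(inconvenientPrimes x y k) : ℝ) ≤ 1728 * Nat.primeCounting ⌊x⌋₊ / √(Real.log y) := by
  have hlogy : 0 < Real.log y := Real.log_pos (by linarith)
  have markov : #(inconvenientPrimes x y k) * (1 / (y * √(Real.log y))) ≤
      432 * x / (Real.log x * (y * Real.log y)) := by
    calc #(inconvenientPrimes x y k) * (1 / (y * √(Real.log y)))
        = ∑ _ ∈ inconvenientPrimes x y k, 1 / (y * √(Real.log y)) := by simp
      _ ≤ ∑ p ∈ inconvenientPrimes x y k, hy y ((p : ℤ) - k).natAbs :=
          sum_le_sum fun p hp ↦ (mem_filter.1 hp).2.le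
      _ ≤ ∑ p ∈ Nat.primesLE ⌊x⌋₊, hy y ((p : ℤ) - k).natAbs :=
          sum_le_sum_of_subset_of_nonneg (filter_subset _ _) fun _ _ _ ↦ hy_nonneg _ _
      _ ≤ 432 * x / (Real.log x * (y * Real.log y)) := sum_hy_shifted_primes_le hx hy1 hyx hk
  rw [mul_one_div, div_le_iff₀ (by positivity)] at markov
  calc (#(inconvenientPrimes x y k) : ℝ)
      ≤ 432 * x / (Real.log x * (y * Real.log y)) * (y * √(Real.log y)) := markov
    _ = 432 * (x / Real.log x) * (√(Real.log y) / Real.log y) := by field_simp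
    _ ≤ 432 * (4 * Nat.primeCounting ⌊x⌋₊) * (√(Real.log y) / Real.log y) := by
        gcongr
        exact div_log_le_four_mul_primeCounting (by linarith)
    _ = 1728 * Nat.primeCounting ⌊x⌋₊ / √(Real.log y) := by
        rw [Real.sqrt_div_self']
        ring

theorem ncard_inconvenient_primes_le {x y : ℝ} (hx : 256 ≤ x) (hy1 : 1 < y)
    (hyx : y * Real.log y ≤ √x) :
    ({p : ℕ | p.Prime ∧ (p : ℝ) ≤ x ∧ (hy y (p - 1) > 1 / (y * √(Real.log y)) ∨
      hy y (p + 1) > 1 / (y * √(Real.log y)))}.ncard : ℝ) ≤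
      3456 * Nat.primeCounting ⌊x⌋₊ / √(Real.log y) := by
  have hsub : {p : ℕ | p.Prime ∧ (p : ℝ) ≤ x ∧ (hy y (p - 1) > 1 / (y * √(Real.log y)) ∨
      hy y (p + 1) > 1 / (y * √(Real.log y)))} ⊆
      (inconvenientPrimes x y 1 ∪ inconvenientPrimes x y (-1) : Finset ℕ) := by
    rintro p ⟨hp, hpx, h⟩
    have sub_one : ((p : ℤ) - 1).natAbs = p - 1 := by have := hp.pos; lia
    have add_one : ((p : ℤ) - -1).natAbs = p + 1 := by lia
    simpa only [coe_union, inconvenientPrimes, coe_filter, Nat.mem_primesLE, sub_one, add_one,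
      Set.mem_union, Set.mem_ofPred_eq, Nat.le_floor hpx, hp, true_and] using h
  have card_le := (Set.ncard_le_ncard hsub (finite_toSet _)).trans_eq (Set.ncard_coe_finset _)
  calc _ ≤ (#(inconvenientPrimes x y 1) + #(inconvenientPrimes x y (-1)) : ℝ) := by
        exact_mod_cast card_le.trans (card_union_le _ _)
    _ ≤ 1728 * Nat.primeCounting ⌊x⌋₊ / √(Real.log y) +
        1728 * Nat.primeCounting ⌊x⌋₊ / √(Real.log y) := by
        gcongr <;> refine card_inconvenientPrimes_le hx hy1 hyx ?_ <;> norm_num <;> linarith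
    _ = 3456 * Nat.primeCounting ⌊x⌋₊ / √(Real.log y) := by ring

theorem eventually_log_sq_le_sqrt : ∀ᶠ x : ℝ in atTop, Real.log x ^ 2 ≤ √x := by
  have h := (isLittleO_log_rpow_rpow_atTop 2 (show (0 : ℝ) < 1 / 2 by norm_num)).eventuallyLE
  filter_upwards [h, eventually_ge_atTop 1] with x h hx
  rwa [Real.norm_of_nonneg (by positivity [Real.log_nonneg hx]), Real.rpow_two,
    ← Real.sqrt_eq_rpow, Real.norm_of_nonneg (Real.sqrt_nonneg x)] at h

theorem eventually_log_log_mul_log_le_sqrt :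
    ∀ᶠ x : ℝ in atTop, Real.log (Real.log x) * Real.log (Real.log (Real.log x)) ≤ √x := by
  have loglog : ∀ᶠ x : ℝ in atTop, 1 ≤ Real.log (Real.log x) :=
    (Real.tendsto_log_atTop.comp Real.tendsto_log_atTop).eventually_ge_atTop 1
  filter_upwards [eventually_log_sq_le_sqrt, loglog, eventually_ge_atTop 1] with x hx hll hx1
  have loglog_le : Real.log (Real.log x) ≤ Real.log x := Real.log_le_self (Real.log_nonneg hx1)
  have logloglog_le := (Real.log_le_self (by linarith)).trans loglog_le
  calc Real.log (Real.log x) * Real.log (Real.log (Real.log x))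
      ≤ Real.log x * Real.log x := mul_le_mul loglog_le logloglog_le (Real.log_nonneg hll)
        (by linarith)
    _ = Real.log x ^ 2 := (sq _).symm
    _ ≤ √x := hx

end

theorem type2_inconvenient_primes :
    (∃ C : ℝ, 0 < C ∧ ∀ᶠ x : ℝ in atTop,
      ({p : ℕ | p.Prime ∧ (p : ℝ) ≤ x ∧
          (hy (Real.log (Real.log x)) (p - 1) >
              1 / (Real.log (Real.log x) * Real.sqrt (Real.log (Real.log (Real.log x)))) ∨
            hy (Real.log (Real.log x)) (p + 1) >
              1 / (Real.log (Real.log x) * Real.sqrt (Real.log (Real.log (Real.log x)))))}.ncard : ℝ) ≤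
        C * (Nat.primeCounting ⌊x⌋₊ : ℝ) / Real.sqrt (Real.log (Real.log (Real.log x)))) ∧
    Tendsto (fun x : ℝ =>
      ({p : ℕ | p.Prime ∧ (p : ℝ) ≤ x ∧
          (hy (Real.log (Real.log x)) (p - 1) >
              1 / (Real.log (Real.log x) * Real.sqrt (Real.log (Real.log (Real.log x)))) ∨
            hy (Real.log (Real.log x)) (p + 1) >
              1 / (Real.log (Real.log x) * Real.sqrt (Real.log (Real.log (Real.log x)))))}.ncard : ℝ) /
        (Nat.primeCounting ⌊x⌋₊ : ℝ)) atTop (𝓝 0) := by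
  have loglog_tendsto : Tendsto (fun x : ℝ ↦ Real.log (Real.log x)) atTop atTop :=
    Real.tendsto_log_atTop.comp Real.tendsto_log_atTop
  have sqrt_tendsto : Tendsto (fun x : ℝ ↦ √(Real.log (Real.log (Real.log x)))) atTop atTop :=
    Real.tendsto_sqrt_atTop.comp (Real.tendsto_log_atTop.comp loglog_tendsto)
  have count_le := (eventually_ge_atTop 256).mp <| (loglog_tendsto.eventually_gt_atTop 1).mp <|
    eventually_log_log_mul_log_le_sqrt.mono fun x hyx hy1 hx ↦
      ncard_inconvenient_primes_le hx hy1 hyx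
  refine ⟨⟨3456, by norm_num, count_le⟩, ?_⟩
  refine squeeze_zero' (.of_forall fun x ↦ by positivity) ?_ (sqrt_tendsto.const_div_atTop 3456)
  filter_upwards [count_le] with x hx
  refine div_le_of_le_mul₀ (by positivity) (by positivity) (hx.trans_eq ?_)
  ring
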